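/- arXiv:1202.1499 — 3 statements merged into one kernel-verified Lean document; each statement's English description precedes it below -/
import Mathlib

section
/- For any c > 0 there is a constant K such that for all positive integers m and n, the total variation distance between the Binomial(m, c/n) distribution and the Poisson(c) distribution is at most K · max{1, |m − n|}/n. -/
open Filter
open scoped Classical

noncomputable section

/-- The probability mass function of the binomial distribution `Binom(m, p)`. -/
def binomPMF (m : ℕ) (p : ℝ) (j : ℕ) : ℝ := (m.choose j : ℝ) * p ^ j * (1 - p) ^ (m - j)

/-- The probability mass function of the Poisson distribution `Pois(c)`. -/
def poisPMF (c : ℝ) (j : ℕ) : ℝ := Real.exp (-c) * c ^ j / (Nat.factorial j)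

/-! Convolution of sequences is multiplication of generating functions, and the `ℓ¹` norm of the
coefficients is submultiplicative. Since `Binom(m, p)` is the `m`-th power of `Bernoulli(p)` and
`Pois(m p)` the `m`-th power of `Pois(p)`, and all these have norm at most `1`, the distance between
them is at most `m` times the distance from `Bernoulli(p)` to `Pois(p)`, which is `O(p²)`.
Replacing `Pois(m p)` by `Pois(c)` costs the distance from `Pois(|m p - c|)` to `Pois(0)`. -/

open PowerSeries
open scoped ENNReal

lemma ennreal_tsum_mul_tsum_eq_tsum_sum_antidiagonal {A : Type*} [AddMonoid A]
    [Finset.HasAntidiagonal A] (u v : A → ℝ≥0∞) :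
    (∑' i, u i) * ∑' j, v j =
      ∑' n, ∑ x ∈ Finset.HasAntidiagonal.antidiagonal n, u x.1 * v x.2 := by
  simp_rw [← ENNReal.tsum_mul_right, ← ENNReal.tsum_mul_left]
  rw [← ENNReal.tsum_prod (f := fun i j ↦ u i * v j),
    ← Finset.HasAntidiagonal.sigmaAntidiagonalEquivProd.tsum_eq, ENNReal.tsum_sigma']
  exact tsum_congr fun n ↦
    Finset.tsum_subtype (Finset.HasAntidiagonal.antidiagonal n) fun x ↦ u x.1 * v x.2

section L1Norm

variable {R : Type*} [NormedRing R]

/-- The `ℓ¹` norm of the coefficients of a power series. Its values are extended nonnegative reals,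
so that no summability is presupposed. -/
def l1Norm (f : R⟦X⟧) : ℝ≥0∞ := ∑' j, ‖coeff j f‖ₑ

lemma toReal_l1Norm (f : R⟦X⟧) : (l1Norm f).toReal = ∑' j, ‖coeff j f‖ := by
  simp only [l1Norm, ENNReal.tsum_toReal_eq fun _ ↦ enorm_ne_top, toReal_enorm]

lemma l1Norm_eq_ofReal {f : R⟦X⟧} {s : ℝ} (h : HasSum (fun j ↦ ‖coeff j f‖) s) :
    l1Norm f = ENNReal.ofReal s := by
  simp only [l1Norm, ← h.tsum_eq, ENNReal.ofReal_tsum_of_nonneg (fun _ ↦ norm_nonneg _) h.summable,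
    ofReal_norm]

lemma l1Norm_add_le (f g : R⟦X⟧) : l1Norm (f + g) ≤ l1Norm f + l1Norm g := by
  simp only [l1Norm, ← ENNReal.tsum_add, map_add]
  exact ENNReal.tsum_le_tsum fun _ ↦ enorm_add_le _ _

lemma l1Norm_sub_rev (f g : R⟦X⟧) : l1Norm (f - g) = l1Norm (g - f) := by
  simp only [l1Norm, map_sub, enorm_sub_rev]

lemma l1Norm_sub_le_add (f g h : R⟦X⟧) : l1Norm (f - h) ≤ l1Norm (f - g) + l1Norm (g - h) := by
  simpa only [sub_add_sub_cancel] using l1Norm_add_le (f - g) (g - h)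

lemma l1Norm_one [NormOneClass R] : l1Norm (1 : R⟦X⟧) = 1 := by
  rw [l1Norm, tsum_eq_single 0 fun j hj ↦ by simp [coeff_one, hj]]
  simp

lemma l1Norm_mul_le (f g : R⟦X⟧) : l1Norm (f * g) ≤ l1Norm f * l1Norm g := by
  simp only [l1Norm, ennreal_tsum_mul_tsum_eq_tsum_sum_antidiagonal, coeff_mul]
  exact ENNReal.tsum_le_tsum fun j ↦ (enorm_sum_le _ _).trans
    (Finset.sum_le_sum fun _ _ ↦ by
      simpa only [enorm_eq_nnnorm, ← ENNReal.coe_mul, ENNReal.coe_le_coe] using nnnorm_mul_le _ _)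

lemma l1Norm_pow_le_one [NormOneClass R] {f : R⟦X⟧} (hf : l1Norm f ≤ 1) (m : ℕ) :
    l1Norm (f ^ m) ≤ 1 := by
  induction m with
  | zero => rw [pow_zero, l1Norm_one]
  | succ m ih => exact pow_succ f m ▸ (l1Norm_mul_le _ _).trans (mul_le_one' ih hf)

lemma l1Norm_pow_sub_pow_le [NormOneClass R] {f g : R⟦X⟧} (hf : l1Norm f ≤ 1) (hg : l1Norm g ≤ 1)
    (m : ℕ) : l1Norm (f ^ m - g ^ m) ≤ m * l1Norm (f - g) := by
  induction m with
  | zero => simp [l1Norm]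
  | succ m ih =>
    calc l1Norm (f ^ (m + 1) - g ^ (m + 1))
        = l1Norm ((f ^ m - g ^ m) * f + g ^ m * (f - g)) := by
          rw [sub_mul, mul_sub, sub_add_sub_cancel, pow_succ, pow_succ]
      _ ≤ l1Norm (f ^ m - g ^ m) * l1Norm f + l1Norm (g ^ m) * l1Norm (f - g) :=
          (l1Norm_add_le _ _).trans (add_le_add (l1Norm_mul_le _ _) (l1Norm_mul_le _ _))
      _ ≤ m * l1Norm (f - g) * 1 + 1 * l1Norm (f - g) := by
          gcongr
          exact l1Norm_pow_le_one hg m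
      _ = (m + 1 : ℕ) * l1Norm (f - g) := by
          push_cast
          ring

end L1Norm

lemma hasSum_abs_sub_of_le_of_ne {ι : Type*} {f g : ι → ℝ} {s : ℝ} (hf : HasSum f s)
    (hg : HasSum g s) {k : ι} (h : ∀ j ≠ k, f j ≤ g j) :
    HasSum (fun j ↦ |f j - g j|) (2 * (f k - g k)) := by
  have hk : g k ≤ f k := by
    by_contra! hlt
    have hle : f ≤ g := fun j ↦ if hj : j = k then hj ▸ hlt.le else h j hj
    exact (hasSum_lt hle hlt hf hg).false
  -- `f - g` has total mass `0`, so its mass at `k` balances all the rest.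
  have hsum := (hg.sub hf).add (hasSum_ite_eq k (2 * (f k - g k)))
  rw [sub_self, zero_add] at hsum
  refine hsum.congr_fun fun j ↦ ?_
  split_ifs with hj
  · rw [hj, abs_of_nonneg (sub_nonneg.2 hk)]
    ring
  · rw [abs_of_nonpos (sub_nonpos.2 (h j hj))]
    ring

lemma l1Norm_mk_sub_mk_of_le_of_ne {f g : ℕ → ℝ} {s : ℝ} (hf : HasSum f s) (hg : HasSum g s)
    {k : ℕ} (h : ∀ j ≠ k, f j ≤ g j) :
    l1Norm (mk f - mk g) = ENNReal.ofReal (2 * (f k - g k)) :=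
  l1Norm_eq_ofReal <| by
    simpa only [map_sub, coeff_mk, Real.norm_eq_abs] using hasSum_abs_sub_of_le_of_ne hf hg h

lemma l1Norm_mk_of_nonneg {f : ℕ → ℝ} {s : ℝ} (h0 : ∀ j, 0 ≤ f j) (hf : HasSum f s) :
    l1Norm (mk f) = ENNReal.ofReal s :=
  l1Norm_eq_ofReal <| by simpa only [coeff_mk, Real.norm_of_nonneg (h0 _)] using hf

lemma binomPMF_eq_zero_of_lt (p : ℝ) {m j : ℕ} (h : m < j) : binomPMF m p j = 0 := by
  simp [binomPMF, Nat.choose_eq_zero_of_lt h]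

lemma binomPMF_nonneg {p : ℝ} (h0 : 0 ≤ p) (h1 : p ≤ 1) (m j : ℕ) : 0 ≤ binomPMF m p j := by
  have := sub_nonneg.2 h1
  unfold binomPMF
  positivity

lemma hasSum_binomPMF (m : ℕ) (p : ℝ) : HasSum (binomPMF m p) 1 := by
  have hsum : ∑ j ∈ Finset.range (m + 1), binomPMF m p j = 1 := by
    rw [← one_pow (M := ℝ) m, ← add_sub_cancel p 1, add_pow]
    exact Finset.sum_congr rfl fun j _ ↦ by rw [binomPMF]; ring
  refine hsum ▸ hasSum_sum_of_ne_finset_zero fun j hj ↦ binomPMF_eq_zero_of_lt p ?_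
  simpa [Nat.lt_succ_iff] using hj

/-- The probability generating function of `Binom(m, p)`. -/
def binomPGF (m : ℕ) (p : ℝ) : ℝ⟦X⟧ := mk (binomPMF m p)

lemma l1Norm_binomPGF {p : ℝ} (h0 : 0 ≤ p) (h1 : p ≤ 1) (m : ℕ) : l1Norm (binomPGF m p) = 1 := by
  rw [binomPGF, l1Norm_mk_of_nonneg (binomPMF_nonneg h0 h1 m) (hasSum_binomPMF m p),
    ENNReal.ofReal_one]

lemma binomPGF_eq_rescale (m : ℕ) (p : ℝ) :
    binomPGF m p =
      rescale p (((Polynomial.X + Polynomial.C (1 - p) : Polynomial ℝ) : ℝ⟦X⟧) ^ m) := by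
  ext j
  rw [← Polynomial.coe_pow, coeff_rescale, Polynomial.coeff_coe, Polynomial.coeff_X_add_C_pow,
    binomPGF, coeff_mk, binomPMF]
  ring

lemma binomPGF_eq_pow (m : ℕ) (p : ℝ) : binomPGF m p = binomPGF 1 p ^ m := by
  rw [binomPGF_eq_rescale, binomPGF_eq_rescale, pow_one, map_pow]

lemma poisPMF_nonneg {c : ℝ} (hc : 0 ≤ c) (j : ℕ) : 0 ≤ poisPMF c j := by
  unfold poisPMF
  positivity

lemma hasSum_poisPMF {c : ℝ} (hc : 0 ≤ c) : HasSum (poisPMF c) 1 :=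
  ProbabilityTheory.hasSum_one_poissonMeasure ⟨c, hc⟩

/-- The probability generating function of `Pois(c)`. -/
def poisPGF (c : ℝ) : ℝ⟦X⟧ := mk (poisPMF c)

lemma l1Norm_poisPGF {c : ℝ} (hc : 0 ≤ c) : l1Norm (poisPGF c) = 1 := by
  rw [poisPGF, l1Norm_mk_of_nonneg (poisPMF_nonneg hc) (hasSum_poisPMF hc), ENNReal.ofReal_one]

lemma poisPGF_eq_rescale_exp (c : ℝ) :
    poisPGF c = C (Real.exp (-c)) * rescale c (PowerSeries.exp ℝ) := by
  ext j
  simp only [poisPGF, poisPMF, coeff_mk, coeff_C_mul, coeff_rescale, coeff_exp, map_div₀, map_one,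
    map_natCast]
  ring

lemma poisPGF_add (a b : ℝ) : poisPGF (a + b) = poisPGF a * poisPGF b := by
  simp only [poisPGF_eq_rescale_exp, ← exp_mul_exp_eq_exp_add, neg_add, Real.exp_add, map_mul]
  ring

lemma poisPGF_zero : poisPGF 0 = 1 := by
  simp [poisPGF_eq_rescale_exp]

lemma poisPGF_pow (c : ℝ) (m : ℕ) : poisPGF c ^ m = poisPGF (m * c) := by
  induction m with
  | zero => rw [pow_zero, Nat.cast_zero, zero_mul, poisPGF_zero]
  | succ m ih => rw [pow_succ, ih, ← poisPGF_add, Nat.cast_succ, add_one_mul]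

lemma l1Norm_poisPGF_sub_one_le {d : ℝ} (hd : 0 ≤ d) :
    l1Norm (poisPGF d - 1) ≤ ENNReal.ofReal (2 * d) := by
  have hle : ∀ j ≠ 0, poisPMF 0 j ≤ poisPMF d j := fun j hj ↦ by
    simpa [poisPMF, hj] using poisPMF_nonneg hd j
  rw [← poisPGF_zero, l1Norm_sub_rev, poisPGF, poisPGF,
    l1Norm_mk_sub_mk_of_le_of_ne (hasSum_poisPMF le_rfl) (hasSum_poisPMF hd) hle]
  apply ENNReal.ofReal_le_ofReal
  have hexp := Real.one_sub_le_exp_neg d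
  simp only [poisPMF, neg_zero, Real.exp_zero, pow_zero, Nat.factorial_zero, Nat.cast_one, mul_one,
    div_one]
  linarith

lemma l1Norm_poisPGF_sub_poisPGF_le {a b : ℝ} (ha : 0 ≤ a) (hb : 0 ≤ b) :
    l1Norm (poisPGF a - poisPGF b) ≤ ENNReal.ofReal (2 * |a - b|) := by
  wlog hba : b ≤ a generalizing a b
  · rw [l1Norm_sub_rev, abs_sub_comm]
    exact this hb ha (le_of_not_ge hba)
  have hab : 0 ≤ a - b := sub_nonneg.2 hba
  calc l1Norm (poisPGF a - poisPGF b)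
      = l1Norm (poisPGF b * (poisPGF (a - b) - 1)) := by
        rw [mul_sub, ← poisPGF_add, add_sub_cancel, mul_one]
    _ ≤ l1Norm (poisPGF b) * l1Norm (poisPGF (a - b) - 1) := l1Norm_mul_le _ _
    _ ≤ ENNReal.ofReal (2 * |a - b|) := by
        rw [l1Norm_poisPGF hb, one_mul, abs_of_nonneg hab]
        exact l1Norm_poisPGF_sub_one_le hab

lemma binomPMF_one_le_poisPMF {p : ℝ} (hp : 0 ≤ p) : ∀ j ≠ 1, binomPMF 1 p j ≤ poisPMF p j
  | 0, _ => by simpa [binomPMF, poisPMF] using Real.one_sub_le_exp_neg p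
  | j + 2, _ => (binomPMF_eq_zero_of_lt p (by omega)).trans_le (poisPMF_nonneg hp _)

lemma l1Norm_binomPGF_one_sub_poisPGF_le {p : ℝ} (hp : 0 ≤ p) :
    l1Norm (binomPGF 1 p - poisPGF p) ≤ ENNReal.ofReal (2 * p ^ 2) := by
  rw [binomPGF, poisPGF, l1Norm_mk_sub_mk_of_le_of_ne (hasSum_binomPMF 1 p) (hasSum_poisPMF hp)
    (binomPMF_one_le_poisPMF hp)]
  apply ENNReal.ofReal_le_ofReal
  have hexp := mul_le_mul_of_nonneg_left (Real.one_sub_le_exp_neg p) hp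
  simp only [binomPMF, poisPMF, Nat.choose_self, Nat.cast_one, one_mul, pow_one, tsub_self,
    pow_zero, mul_one, Nat.factorial_one, div_one]
  linarith

lemma l1Norm_binomPGF_sub_poisPGF_le {p c : ℝ} (h0 : 0 ≤ p) (h1 : p ≤ 1) (hc : 0 ≤ c) (m : ℕ) :
    l1Norm (binomPGF m p - poisPGF c) ≤ ENNReal.ofReal (2 * (m * p ^ 2 + |m * p - c|)) :=
  calc l1Norm (binomPGF m p - poisPGF c)
      ≤ l1Norm (binomPGF 1 p ^ m - poisPGF p ^ m) + l1Norm (poisPGF (m * p) - poisPGF c) := by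
        rw [binomPGF_eq_pow, poisPGF_pow]
        exact l1Norm_sub_le_add _ _ _
    _ ≤ m * l1Norm (binomPGF 1 p - poisPGF p) + l1Norm (poisPGF (m * p) - poisPGF c) := by
        gcongr
        exact l1Norm_pow_sub_pow_le (l1Norm_binomPGF h0 h1 1).le (l1Norm_poisPGF h0).le m
    _ ≤ m * ENNReal.ofReal (2 * p ^ 2) + ENNReal.ofReal (2 * |m * p - c|) := by
        gcongr
        · exact l1Norm_binomPGF_one_sub_poisPGF_le h0
        · exact l1Norm_poisPGF_sub_poisPGF_le (by positivity) hc
    _ = ENNReal.ofReal (2 * (m * p ^ 2 + |m * p - c|)) := by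
        rw [← ENNReal.ofReal_natCast, ← ENNReal.ofReal_mul (by positivity),
          ← ENNReal.ofReal_add (by positivity) (by positivity)]
        congr 1
        ring

lemma half_tsum_abs_binomPMF_sub_poisPMF_le {p c : ℝ} (h0 : 0 ≤ p) (h1 : p ≤ 1) (hc : 0 ≤ c)
    (m : ℕ) : (1 / 2) * ∑' j, |binomPMF m p j - poisPMF c j| ≤ m * p ^ 2 + |m * p - c| := by
  have h := ENNReal.toReal_le_of_le_ofReal (by positivity)
    (l1Norm_binomPGF_sub_poisPGF_le h0 h1 hc m)
  simp only [toReal_l1Norm, binomPGF, poisPGF, map_sub, coeff_mk, Real.norm_eq_abs] at h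
  linarith

/-- For any `c > 0` there is a constant `K` such that for all positive
integers `m`, `n` (with `c ≤ n`, so that `c/n` is a genuine success probability), the total
variation distance between `Binom(m, c/n)` and `Pois(c)` is at most
`K · max{1, |m − n|}/n`. -/
theorem statement10 (c : ℝ) (hc : 0 < c) :
    ∃ K : ℝ, ∀ m n : ℕ, 0 < m → 0 < n → c ≤ n →
      (1 / 2) * ∑' j : ℕ, |binomPMF m (c / n) j - poisPMF c j| ≤
        K * max 1 |(m : ℝ) - (n : ℝ)| / n := by
  refine ⟨2 * c ^ 2 + c, fun m n _ hn hcn ↦ ?_⟩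
  have hn1 : (1 : ℝ) ≤ n := by exact_mod_cast hn
  have hn0 : (0 : ℝ) < n := by positivity
  set M : ℝ := max 1 |(m : ℝ) - n|
  have hM : 1 ≤ M := le_max_left _ _
  have hmn : |(m : ℝ) - n| ≤ M := le_max_right _ _
  have hm : (m : ℝ) ≤ 2 * n * M := by nlinarith [le_abs_self ((m : ℝ) - n)]
  calc (1 / 2) * ∑' j, |binomPMF m (c / n) j - poisPMF c j|
      ≤ m * (c / n) ^ 2 + |m * (c / n) - c| :=
        half_tsum_abs_binomPMF_sub_poisPMF_le (by positivity) ((div_le_one hn0).2 hcn) hc.le m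
    _ = m * (c / n) ^ 2 + |(m : ℝ) - n| * (c / n) := by
        rw [← abs_of_pos (div_pos hc hn0), ← abs_mul, abs_of_pos (div_pos hc hn0), sub_mul,
          mul_div_cancel₀ c hn0.ne']
    _ ≤ 2 * n * M * (c / n) ^ 2 + M * (c / n) := by gcongr
    _ = (2 * c ^ 2 + c) * M / n := by field_simp

end
end

section
/- Let ξ_1, ξ_2, … be independent uniform random signs in {+1, −1} and Z_n = n^{−1/2} Σ_{i=1}^n ξ_i. Then for every real s < 1, E[exp(s Z_n^2 / 2)] → 1/√(1 − s) as n → ∞. -/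
open Filter
open scoped Classical

noncomputable section

/-!
By the central limit theorem `Z_n` converges in law to a standard Gaussian `G`, and
`E[exp(s G² / 2)] = 1/√(1 - s)`; only the exchange of limit and expectation needs an argument.
Linearizing the square by an auxiliary `N ~ N(0, r)`, `exp(r x² / 2) = E[exp(x N)]`, Tonelli turns
the sub-Gaussian bound `E[exp(y Z_n)] ≤ exp(y² / 2)` into
`E[exp(r Z_n² / 2)] ≤ E[exp(N² / 2)] = 1/√(1 - r)` for `0 ≤ r < 1`. If `0 ≤ s`, taking `r = p s`
with `p > 1` bounds the `p`-th moments of `exp(s Z_n² / 2)` uniformly in `n`; if `s < 0` these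
variables are at most `1`. In both cases they are uniformly integrable.
-/

section

open MeasureTheory ProbabilityTheory Finset Real
open scoped NNReal Topology

section UniformIntegrability

lemma sub_min_le_rpow_mul_rpow {a k p : ℝ} (ha : 0 ≤ a) (hk : 0 < k) (hp : 1 ≤ p) :
    a - min a k ≤ k ^ (1 - p) * a ^ p := by
  rcases le_total a k with hak | hka
  · rw [min_eq_left hak, sub_self]
    positivity
  · calc a - min a k ≤ 1 * a := by rw [min_eq_right hka]; linarith
      _ ≤ (a / k) ^ (p - 1) * a := by
          gcongr
          exact one_le_rpow ((one_le_div hk).2 hka) (sub_nonneg.2 hp)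
      _ = k ^ (1 - p) * a ^ p := by
          rw [div_rpow ha hk.le, ← neg_sub p 1, rpow_neg hk.le,
            rpow_sub_one (hk.trans_le hka).ne']
          have := (hk.trans_le hka).ne'
          field_simp

lemma integrable_of_integrable_rpow {Ω : Type*} [MeasurableSpace Ω] {μ : Measure Ω}
    [IsFiniteMeasure μ] {f : Ω → ℝ} {p : ℝ} (hp : 1 ≤ p) (hf : AEStronglyMeasurable f μ)
    (hf0 : ∀ x, 0 ≤ f x) (hfp : Integrable (fun x ↦ f x ^ p) μ) : Integrable f μ := by
  refine ((integrable_const (1 : ℝ)).add hfp).mono' hf (ae_of_all _ fun x ↦ ?_)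
  have h := sub_min_le_rpow_mul_rpow (hf0 x) one_pos hp
  rw [one_rpow, one_mul] at h
  rw [norm_of_nonneg (hf0 x), Pi.add_apply]
  linarith [min_le_right (f x) 1]

lemma integral_sub_integral_min_mem_Icc {Ω : Type*} [MeasurableSpace Ω] {μ : Measure Ω}
    [IsFiniteMeasure μ] {f : Ω → ℝ} {k p : ℝ} (hk : 0 < k) (hp : 1 ≤ p)
    (hf : AEStronglyMeasurable f μ) (hf0 : ∀ x, 0 ≤ f x)
    (hfp : Integrable (fun x ↦ f x ^ p) μ) :
    ∫ x, f x ∂μ - ∫ x, min (f x) k ∂μ ∈ Set.Icc 0 (k ^ (1 - p) * ∫ x, f x ^ p ∂μ) := by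
  have hfi : Integrable f μ := integrable_of_integrable_rpow hp hf hf0 hfp
  have hmin : Integrable (fun x ↦ min (f x) k) μ := hfi.inf (integrable_const k)
  rw [← integral_sub hfi hmin, ← integral_const_mul]
  exact ⟨integral_nonneg fun x ↦ sub_nonneg.2 (min_le_left _ _),
    integral_mono (hfi.sub hmin) (hfp.const_mul _)
      fun x ↦ sub_min_le_rpow_mul_rpow (hf0 x) hk hp⟩

lemma tendsto_integral_min_atTop {Ω : Type*} [MeasurableSpace Ω] {μ : Measure Ω} {f : Ω → ℝ}
    (hf : Integrable f μ) (hf0 : ∀ x, 0 ≤ f x) :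
    Tendsto (fun k ↦ ∫ x, min (f x) k ∂μ) atTop (𝓝 (∫ x, f x ∂μ)) := by
  refine tendsto_integral_filter_of_dominated_convergence f
    (.of_forall fun k ↦ hf.1.inf aestronglyMeasurable_const) ?_ hf (ae_of_all _ fun x ↦ ?_)
  · filter_upwards [eventually_ge_atTop 0] with k hk
    refine ae_of_all _ fun x ↦ ?_
    rw [norm_of_nonneg (le_min (hf0 x) hk)]
    exact min_le_left _ _
  · refine tendsto_const_nhds.congr' ?_
    filter_upwards [eventually_ge_atTop (f x)] with k hk using (min_eq_left hk).symm

variable {E ι Ω' : Type*} {Ω : ι → Type*} [TopologicalSpace E] [MeasurableSpace E]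
  [OpensMeasurableSpace E] [∀ i, MeasurableSpace (Ω i)] [MeasurableSpace Ω']
  {P : ∀ i, Measure (Ω i)} [∀ i, IsProbabilityMeasure (P i)]
  {P' : Measure Ω'} [IsProbabilityMeasure P'] {X : ∀ i, Ω i → E} {Z : Ω' → E} {l : Filter ι}
  {f : E → ℝ}

lemma tendsto_integral_min_comp_of_tendstoInDistribution (h : TendstoInDistribution X l Z P P')
    (hf : Continuous f) (hf0 : ∀ x, 0 ≤ f x) {k : ℝ} (hk : 0 ≤ k) :
    Tendsto (fun i ↦ ∫ ω, min (f (X i ω)) k ∂(P i)) l (𝓝 (∫ ω, min (f (Z ω)) k ∂P')) := by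
  have hfk : Continuous fun x ↦ min (f x) k := by fun_prop
  have h_tendsto := ProbabilityMeasure.tendsto_iff_forall_integral_tendsto.1 h.tendsto <|
    .ofNormedAddCommGroup (fun x ↦ min (f x) k) hfk k fun x ↦ by
      rw [norm_of_nonneg (le_min (hf0 x) hk)]
      exact min_le_right _ _
  simpa [integral_map (h.forall_aemeasurable _) hfk.measurable.aestronglyMeasurable,
    integral_map h.aemeasurable_limit hfk.measurable.aestronglyMeasurable] using h_tendsto

theorem tendsto_integral_comp_of_tendstoInDistribution (h : TendstoInDistribution X l Z P P')
    (hf : Continuous f) (hf0 : ∀ x, 0 ≤ f x) (hfZ : Integrable (fun ω ↦ f (Z ω)) P')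
    {p C : ℝ} (hp : 1 < p) (hfp : ∀ i, Integrable (fun ω ↦ f (X i ω) ^ p) (P i))
    (hC : ∀ i, ∫ ω, f (X i ω) ^ p ∂(P i) ≤ C) :
    Tendsto (fun i ↦ ∫ ω, f (X i ω) ∂(P i)) l (𝓝 (∫ ω, f (Z ω) ∂P')) := by
  have h_unif : TendstoUniformly (fun k i ↦ ∫ ω, min (f (X i ω)) k ∂(P i))
      (fun i ↦ ∫ ω, f (X i ω) ∂(P i)) atTop := by
    have h_lim : Tendsto (fun k : ℝ ↦ k ^ (1 - p) * C) atTop (𝓝 0) := by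
      simpa using (tendsto_rpow_neg_atTop (sub_pos.2 hp)).mul_const C
    refine Metric.tendstoUniformly_iff.2 fun ε hε ↦ ?_
    filter_upwards [eventually_gt_atTop 0, h_lim.eventually_lt_const hε] with k hk hkε i
    obtain ⟨h_nonneg, h_le⟩ := integral_sub_integral_min_mem_Icc hk hp.le
      (hf.measurable.comp_aemeasurable (h.forall_aemeasurable i)).aestronglyMeasurable
      (fun ω ↦ hf0 (X i ω)) (hfp i)
    rw [Function.comp_def] at h_nonneg h_le
    rw [dist_eq, abs_of_nonneg h_nonneg]
    calc _ ≤ k ^ (1 - p) * ∫ ω, f (X i ω) ^ p ∂(P i) := h_le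
      _ ≤ k ^ (1 - p) * C := by gcongr; exact hC i
      _ < ε := hkε
  have h_weak : ∀ᶠ k in atTop, Tendsto (fun i ↦ ∫ ω, min (f (X i ω)) k ∂(P i)) l
      (𝓝 (∫ ω, min (f (Z ω)) k ∂P')) := by
    filter_upwards [eventually_ge_atTop 0] with k hk
    exact tendsto_integral_min_comp_of_tendstoInDistribution h hf hf0 hk
  exact h_unif.tendsto_of_eventually_tendsto h_weak
    (tendsto_integral_min_atTop hfZ fun ω ↦ hf0 (Z ω))

end UniformIntegrability

section Gaussian

lemma integral_exp_mul_sq_gaussianReal {s : ℝ} {v : ℝ≥0} (hsv : s * v < 1) :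
    ∫ x, exp (s * x ^ 2 / 2) ∂(gaussianReal 0 v) = 1 / √(1 - s * v) := by
  rcases eq_or_ne v 0 with rfl | hv
  · simp
  have : (0 : ℝ) < v := by positivity
  have h_density (x : ℝ) : gaussianPDFReal 0 v x • exp (s * x ^ 2 / 2)
      = (√(2 * π * v))⁻¹ * exp (-((1 - s * v) / (2 * v)) * x ^ 2) := by
    rw [gaussianPDFReal, smul_eq_mul, mul_assoc, ← exp_add]
    congr 2
    field_simp
    ring
  have h_ratio : π / ((1 - s * v) / (2 * v)) = 2 * π * v / (1 - s * v) := by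
    have : 1 - s * v ≠ 0 := by linarith
    field_simp
  simp_rw [integral_gaussianReal_eq_integral_smul hv, h_density]
  rw [integral_const_mul, integral_gaussian, h_ratio, sqrt_div (by positivity)]
  field_simp

lemma integrable_exp_mul_sq_gaussianReal {s : ℝ} {v : ℝ≥0} (hsv : s * v < 1) :
    Integrable (fun x ↦ exp (s * x ^ 2 / 2)) (gaussianReal 0 v) := by
  refine .of_integral_ne_zero ?_
  rw [integral_exp_mul_sq_gaussianReal hsv]
  have : 0 < 1 - s * v := sub_pos.2 hsv
  positivity

lemma lintegral_exp_mul_sq_gaussianReal {s : ℝ} {v : ℝ≥0} (hsv : s * v < 1) :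
    ∫⁻ x, ENNReal.ofReal (exp (s * x ^ 2 / 2)) ∂(gaussianReal 0 v)
      = ENNReal.ofReal (1 / √(1 - s * v)) := by
  rw [← ofReal_integral_eq_lintegral_ofReal (integrable_exp_mul_sq_gaussianReal hsv)
    (ae_of_all _ fun x ↦ (exp_pos _).le), integral_exp_mul_sq_gaussianReal hsv]

lemma lintegral_exp_mul_gaussianReal (t : ℝ) (v : ℝ≥0) :
    ∫⁻ x, ENNReal.ofReal (exp (t * x)) ∂(gaussianReal 0 v)
      = ENNReal.ofReal (exp (v * t ^ 2 / 2)) := by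
  rw [← ofReal_integral_eq_lintegral_ofReal (integrable_exp_mul_gaussianReal t)
    (ae_of_all _ fun x ↦ (exp_pos _).le)]
  have h := congrFun (mgf_fun_id_gaussianReal (μ := 0) (v := v)) t
  rw [zero_mul, zero_add] at h
  rw [← h, mgf]

end Gaussian

section SubGaussian

variable {Ω : Type*} [MeasurableSpace Ω] {P : Measure Ω} {X : Ω → ℝ} {c : ℝ≥0}

lemma isFiniteMeasure_of_hasSubgaussianMGF (hX : HasSubgaussianMGF X c P) :
    IsFiniteMeasure P := by
  simpa [integrable_const_iff, isFiniteMeasure_iff] using hX.integrable_exp_mul 0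

lemma lintegral_exp_mul_le_of_hasSubgaussianMGF (hX : HasSubgaussianMGF X c P) (t : ℝ) :
    ∫⁻ ω, ENNReal.ofReal (exp (t * X ω)) ∂P ≤ ENNReal.ofReal (exp (c * t ^ 2 / 2)) := by
  rw [← ofReal_integral_eq_lintegral_ofReal (hX.integrable_exp_mul t)
    (ae_of_all _ fun ω ↦ (exp_pos _).le)]
  exact ENNReal.ofReal_le_ofReal (hX.mgf_le t)

-- `1 / √(1 - s c)` is no upper bound when `s < 0 < c`: take `X = 0`.
lemma lintegral_exp_mul_sq_le_of_hasSubgaussianMGF (hX : HasSubgaussianMGF X c P) {s : ℝ}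
    (hsc : s * c < 1) :
    ∫⁻ ω, ENNReal.ofReal (exp (s * X ω ^ 2 / 2)) ∂P
      ≤ ENNReal.ofReal (1 / √(1 - max s 0 * c)) := by
  have := isFiniteMeasure_of_hasSubgaussianMGF hX
  have hX_meas := hX.aemeasurable
  have hcs : c * max s 0 < 1 := by
    rcases le_total s 0 with hs | hs
    · simp [hs]
    · rwa [max_eq_left hs, mul_comm]
  rw [mul_comm _ (c : ℝ)]
  rw [← coe_toNNReal'] at hcs ⊢
  set v := s.toNNReal
  calc ∫⁻ ω, ENNReal.ofReal (exp (s * X ω ^ 2 / 2)) ∂P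
      ≤ ∫⁻ ω, ENNReal.ofReal (exp (v * X ω ^ 2 / 2)) ∂P := by
        gcongr
        exact le_coe_toNNReal s
    _ = ∫⁻ ω, ∫⁻ y, ENNReal.ofReal (exp (X ω * y)) ∂(gaussianReal 0 v) ∂P := by
        simp_rw [lintegral_exp_mul_gaussianReal]
    _ = ∫⁻ y, ∫⁻ ω, ENNReal.ofReal (exp (y * X ω)) ∂P ∂(gaussianReal 0 v) := by
        simp_rw [mul_comm _ (X _)]
        exact lintegral_lintegral_swap (by fun_prop)
    _ ≤ ∫⁻ y, ENNReal.ofReal (exp (c * y ^ 2 / 2)) ∂(gaussianReal 0 v) :=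
        lintegral_mono (lintegral_exp_mul_le_of_hasSubgaussianMGF hX)
    _ = ENNReal.ofReal (1 / √(1 - c * v)) := lintegral_exp_mul_sq_gaussianReal hcs

lemma integrable_exp_mul_sq_of_hasSubgaussianMGF (hX : HasSubgaussianMGF X c P) {s : ℝ}
    (hsc : s * c < 1) : Integrable (fun ω ↦ exp (s * X ω ^ 2 / 2)) P := by
  have hX_meas := hX.aemeasurable
  refine ⟨by fun_prop, ?_⟩
  rw [hasFiniteIntegral_iff_ofReal (ae_of_all _ fun ω ↦ (exp_pos _).le)]
  exact (lintegral_exp_mul_sq_le_of_hasSubgaussianMGF hX hsc).trans_lt ENNReal.ofReal_lt_top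

lemma integral_exp_mul_sq_le_of_hasSubgaussianMGF (hX : HasSubgaussianMGF X c P) {s : ℝ}
    (hsc : s * c < 1) : ∫ ω, exp (s * X ω ^ 2 / 2) ∂P ≤ 1 / √(1 - max s 0 * c) := by
  have h := lintegral_exp_mul_sq_le_of_hasSubgaussianMGF hX hsc
  rwa [← ofReal_integral_eq_lintegral_ofReal (integrable_exp_mul_sq_of_hasSubgaussianMGF hX hsc)
    (ae_of_all _ fun ω ↦ (exp_pos _).le), ENNReal.ofReal_le_ofReal_iff (by positivity)] at h

lemma integral_eq_zero_of_hasSubgaussianMGF [IsProbabilityMeasure P]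
    (hX : HasSubgaussianMGF X c P) : P[X] = 0 := by
  have h0 : (0 : ℝ) ∈ interior (integrableExpSet X P) := by
    simp [hX.integrableExpSet_eq_univ]
  have h_max : IsLocalMax (fun t ↦ mgf X P t - exp (c * t ^ 2 / 2)) 0 :=
    .of_forall fun t ↦ by simpa using hX.mgf_le t
  have h_deriv : HasDerivAt (fun t ↦ mgf X P t - exp (c * t ^ 2 / 2)) P[X] 0 := by
    have h_exp : HasDerivAt (fun t : ℝ ↦ exp (c * t ^ 2 / 2)) 0 0 := by
      simpa using ((((hasDerivAt_id (0 : ℝ)).pow 2).const_mul (c : ℝ)).div_const 2).exp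
    simpa using (hasDerivAt_mgf h0).fun_sub h_exp
  exact h_max.hasDerivAt_eq_zero h_deriv

lemma one_add_sq_div_two_le_cosh (x : ℝ) : 1 + x ^ 2 / 2 ≤ cosh x := by
  simpa [sum_range_succ] using
    sum_le_hasSum (range 2) (fun n _ ↦ by rw [pow_mul]; positivity) (hasSum_cosh x)

lemma sq_mul_integral_sq_le_of_hasSubgaussianMGF [IsProbabilityMeasure P]
    (hX : HasSubgaussianMGF X c P) (t : ℝ) :
    t ^ 2 * ∫ ω, X ω ^ 2 ∂P ≤ 2 * (exp (c * t ^ 2 / 2) - 1) := by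
  have h_sq := (hX.memLp 2).integrable_sq.const_mul (t ^ 2)
  have h_mono : ∫ ω, (2 + t ^ 2 * X ω ^ 2) ∂P ≤ ∫ ω, (exp (t * X ω) + exp (-t * X ω)) ∂P := by
    refine integral_mono ((integrable_const _).add h_sq)
      ((hX.integrable_exp_mul _).add (hX.integrable_exp_mul _)) fun ω ↦ ?_
    have h_cosh := one_add_sq_div_two_le_cosh (t * X ω)
    rw [cosh_eq, mul_pow, ← neg_mul] at h_cosh
    linarith
  rw [integral_add (integrable_const _) h_sq, integral_const_mul, integral_const,
    probReal_univ, one_smul,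
    integral_add (hX.integrable_exp_mul _) (hX.integrable_exp_mul _)] at h_mono
  have h_pos : ∫ ω, exp (t * X ω) ∂P ≤ exp (c * t ^ 2 / 2) := hX.mgf_le t
  have h_neg : ∫ ω, exp (-t * X ω) ∂P ≤ exp (c * t ^ 2 / 2) := by
    simpa only [neg_sq, mgf] using hX.mgf_le (-t)
  linarith

-- First-order comparison in `u = t²` at `u = 0` in the previous inequality.
lemma integral_sq_le_of_hasSubgaussianMGF [IsProbabilityMeasure P]
    (hX : HasSubgaussianMGF X c P) : ∫ ω, X ω ^ 2 ∂P ≤ c := by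
  have h_le (u : ℝ) (hu : 0 < u) : ∫ ω, X ω ^ 2 ∂P ≤ 2 * (u⁻¹ * (exp (c / 2 * u) - 1)) := by
    have h := sq_mul_integral_sq_le_of_hasSubgaussianMGF hX √u
    rw [sq_sqrt hu.le, mul_div_right_comm] at h
    rwa [mul_left_comm, ← div_eq_inv_mul, le_div_iff₀' hu]
  have h_lim : Tendsto (fun u : ℝ ↦ 2 * (u⁻¹ * (exp (c / 2 * u) - 1))) (𝓝[>] 0) (𝓝 c) := by
    have h_deriv : HasDerivAt (fun u : ℝ ↦ exp (c / 2 * u)) (c / 2 : ℝ) 0 := by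
      simpa using ((hasDerivAt_id (0 : ℝ)).const_mul (c / 2 : ℝ)).exp
    simpa [mul_div_cancel₀] using h_deriv.tendsto_slope_zero_right.const_mul 2
  exact ge_of_tendsto h_lim (eventually_nhdsWithin_of_forall h_le)

lemma variance_le_of_hasSubgaussianMGF [IsProbabilityMeasure P]
    (hX : HasSubgaussianMGF X c P) : Var[X; P] ≤ c := by
  rw [variance_of_integral_eq_zero hX.aemeasurable (integral_eq_zero_of_hasSubgaussianMGF hX)]
  exact integral_sq_le_of_hasSubgaussianMGF hX

end SubGaussian

section CentralLimit

variable {Ω : Type*} [MeasurableSpace Ω] {P : Measure Ω} {X : ℕ → Ω → ℝ} {c : ℝ≥0}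

lemma hasSubgaussianMGF_inv_sqrt_mul_sum (hindep : iIndepFun X P)
    (hX : ∀ i, HasSubgaussianMGF (X i) c P) (n : ℕ) :
    HasSubgaussianMGF (fun ω ↦ (√n)⁻¹ * ∑ k ∈ range n, X k ω) c P := by
  have h := (HasSubgaussianMGF.sum_of_iIndepFun hindep (s := range n) (c := fun _ ↦ c)
    fun i _ ↦ hX i).const_mul (√n)⁻¹
  refine ⟨h.integrable_exp_mul, fun t ↦ (h.mgf_le t).trans ?_⟩
  have h_param : ((√n)⁻¹ ^ 2 * (n * c) : ℝ) ≤ c := by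
    rw [inv_pow, sq_sqrt n.cast_nonneg, ← mul_assoc]
    exact mul_le_of_le_one_left c.2 inv_mul_le_one
  gcongr
  rw [sum_const, card_range, nsmul_eq_mul]
  exact_mod_cast h_param

lemma tendstoInDistribution_inv_sqrt_mul_sum_of_integral_eq_zero [IsProbabilityMeasure P]
    (h0 : P[X 0] = 0) (hX : MemLp (X 0) 2 P) (hindep : iIndepFun X P)
    (hident : ∀ i, IdentDistrib (X i) (X 0) P P) :
    TendstoInDistribution (fun (n : ℕ) ω ↦ (√n)⁻¹ * ∑ k ∈ range n, X k ω) atTop id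
      (fun _ ↦ P) (gaussianReal 0 Var[X 0; P].toNNReal) := by
  simpa [h0] using tendstoInDistribution_inv_sqrt_mul_sum_sub .id hX hindep hident

theorem statement15_general [IsProbabilityMeasure P] (hindep : iIndepFun X P)
    (hident : ∀ i, IdentDistrib (X i) (X 0) P P) (hX : HasSubgaussianMGF (X 0) c P) {s : ℝ}
    (hsc : s * c < 1) :
    Tendsto (fun n : ℕ ↦ ∫ ω, exp (s * ((∑ k ∈ range n, X k ω) / √n) ^ 2 / 2) ∂P) atTop
      (𝓝 (1 / √(1 - s * Var[X 0; P]))) := by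
  have h_clt := tendstoInDistribution_inv_sqrt_mul_sum_of_integral_eq_zero
    (integral_eq_zero_of_hasSubgaussianMGF hX) (hX.memLp 2) hindep hident
  have h_sub (n : ℕ) := hasSubgaussianMGF_inv_sqrt_mul_sum hindep
    (fun i ↦ hX.congr_identDistrib (hident i).symm) n
  have h_var : s * Var[X 0; P].toNNReal < 1 := by
    rw [coe_toNNReal _ (variance_nonneg _ _)]
    rcases le_total s 0 with hs | hs
    · nlinarith [variance_nonneg (X 0) P]
    · exact (mul_le_mul_of_nonneg_left (variance_le_of_hasSubgaussianMGF hX) hs).trans_lt hsc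
  -- `(2 - s c) s c = 1 - (1 - s c)² < 1`
  obtain ⟨p, hp, hpsc⟩ : ∃ p, 1 < p ∧ p * s * c < 1 :=
    ⟨2 - s * c, by linarith, by nlinarith [sq_pos_of_pos (sub_pos.2 hsc)]⟩
  have h_rpow (x : ℝ) : exp (s * x ^ 2 / 2) ^ p = exp (p * s * x ^ 2 / 2) := by
    rw [← exp_mul]
    ring_nf
  have h_lim := tendsto_integral_comp_of_tendstoInDistribution h_clt
    (f := fun x ↦ exp (s * x ^ 2 / 2)) (by fun_prop) (fun x ↦ (exp_pos _).le)
    (integrable_exp_mul_sq_gaussianReal h_var) hp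
    (fun n ↦ by
      simpa only [h_rpow] using integrable_exp_mul_sq_of_hasSubgaussianMGF (h_sub n) hpsc)
    (fun n ↦ by
      simpa only [h_rpow] using integral_exp_mul_sq_le_of_hasSubgaussianMGF (h_sub n) hpsc)
  simp only [id, integral_exp_mul_sq_gaussianReal h_var, coe_toNNReal _ (variance_nonneg _ _)]
    at h_lim
  simpa only [div_eq_inv_mul _ √_] using h_lim

end CentralLimit

section UniformProduct

variable {α : Type*} [MeasurableSpace α]

lemma identDistrib_comp_eval_infinitePi {ι β : Type*} [MeasurableSpace β] {μ : Measure α}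
    [IsProbabilityMeasure μ] {f : α → β} (hf : Measurable f) (i : ι) :
    IdentDistrib (fun ω ↦ f (ω i)) f (Measure.infinitePi fun _ : ι ↦ μ) μ where
  aemeasurable_fst := (hf.comp (measurable_pi_apply i)).aemeasurable
  aemeasurable_snd := hf.aemeasurable
  map_eq := by
    conv_rhs => rw [← Measure.infinitePi_map_eval (fun _ : ι ↦ μ) i,
      Measure.map_map hf (measurable_pi_apply i), Function.comp_def]

variable [MeasurableSingletonClass α]

instance isProbabilityMeasure_uniformOn_univ [Finite α] [Nonempty α] :
    IsProbabilityMeasure (uniformOn (Set.univ : Set α)) :=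
  isProbabilityMeasure_uniformOn Set.finite_univ Set.univ_nonempty

lemma infinitePi_uniformOn_univ_map_comp [Finite α] [Nonempty α] {ι κ : Type*} [Finite κ]
    {e : κ → ι} (he : e.Injective) :
    (Measure.infinitePi fun _ : ι ↦ uniformOn (Set.univ : Set α)).map (fun ω k ↦ ω (e k))
      = uniformOn Set.univ := by
  have := Fintype.ofFinite α
  have := Fintype.ofFinite κ
  rw [Measure.map_infinitePi_infinitePi_of_inj he, Measure.infinitePi_eq_pi, ← uniformOn_pi,
    Set.pi_univ]

variable [Fintype α]

lemma integral_uniformOn_univ (f : α → ℝ) :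
    ∫ a, f a ∂(uniformOn Set.univ) = (Fintype.card α : ℝ)⁻¹ * ∑ a, f a := by
  rw [uniformOn, ProbabilityTheory.cond, integral_smul_measure, Measure.restrict_univ,
    integral_count]
  simp

lemma integral_comp_infinitePi_uniformOn_univ [Nonempty α] {ι κ : Type*} [Fintype κ]
    [DecidableEq κ] {e : κ → ι} (he : e.Injective) (F : (κ → α) → ℝ) :
    ∫ ω, F (fun k ↦ ω (e k)) ∂(Measure.infinitePi fun _ : ι ↦ uniformOn (Set.univ : Set α))
      = ((Fintype.card α : ℝ) ^ Fintype.card κ)⁻¹ * ∑ ξ, F ξ := by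
  have h_meas : Measurable fun (ω : ι → α) k ↦ ω (e k) := by fun_prop
  rw [← integral_map (φ := fun (ω : ι → α) k ↦ ω (e k)) h_meas.aemeasurable
    (measurable_of_finite F).aestronglyMeasurable, infinitePi_uniformOn_univ_map_comp he,
    integral_uniformOn_univ, Fintype.card_fun, Nat.cast_pow]

end UniformProduct

section CoinSign

/-- The sign shown by a coin: `true ↦ +1`, `false ↦ -1`. For the uniform measure on `Bool` this is
a Rademacher random variable. -/
def coinSign (b : Bool) : ℝ := if b then 1 else -1

lemma integral_coinSign : ∫ b, coinSign b ∂(uniformOn Set.univ) = 0 := by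
  rw [integral_uniformOn_univ]
  simp [coinSign]

lemma variance_coinSign : Var[coinSign; uniformOn Set.univ] = 1 := by
  rw [variance_of_integral_eq_zero (measurable_of_finite _).aemeasurable integral_coinSign,
    integral_uniformOn_univ]
  norm_num [coinSign]

lemma hasSubgaussianMGF_coinSign : HasSubgaussianMGF coinSign 1 (uniformOn Set.univ) := by
  have h_mem (b : Bool) : coinSign b ∈ Set.Icc (-1) 1 := by cases b <;> norm_num [coinSign]
  have h := hasSubgaussianMGF_of_mem_Icc_of_integral_eq_zero
    (measurable_of_finite coinSign).aemeasurable (ae_of_all _ h_mem) integral_coinSign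
  have h_param : (‖(1 : ℝ) - -1‖₊ / 2) ^ 2 = 1 := by
    ext
    norm_num
  rwa [h_param] at h

lemma tendsto_integral_exp_mul_sq_sum_coinSign {s : ℝ} (hs : s < 1) :
    Tendsto (fun n : ℕ ↦ ∫ ω, exp (s * ((∑ k ∈ range n, coinSign (ω k)) / √n) ^ 2 / 2)
        ∂(Measure.infinitePi fun _ : ℕ ↦ uniformOn Set.univ)) atTop (𝓝 (1 / √(1 - s))) := by
  have h_law := identDistrib_comp_eval_infinitePi (ι := ℕ) (μ := uniformOn Set.univ)
    (measurable_of_finite coinSign)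
  have h_indep := iIndepFun_infinitePi (P := fun _ : ℕ ↦ uniformOn Set.univ)
    (X := fun _ ↦ coinSign) fun _ ↦ measurable_of_finite _
  have h_lim := statement15_general h_indep (fun k ↦ (h_law k).trans (h_law 0).symm)
    (hasSubgaussianMGF_coinSign.congr_identDistrib (h_law 0).symm) (s := s) (by simpa using hs)
  rwa [(h_law 0).variance_eq, variance_coinSign, mul_one] at h_lim

lemma integral_exp_mul_sq_sum_coinSign (s : ℝ) (n : ℕ) :
    ∫ ω, exp (s * ((∑ k ∈ range n, coinSign (ω k)) / √n) ^ 2 / 2)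
        ∂(Measure.infinitePi fun _ : ℕ ↦ uniformOn Set.univ)
      = (1 / 2) ^ n * ∑ ξ : Fin n → Bool, exp (s * ((∑ i, coinSign (ξ i)) / √n) ^ 2 / 2) := by
  have h := integral_comp_infinitePi_uniformOn_univ (α := Bool) (Fin.val_injective (n := n))
    fun ξ ↦ exp (s * ((∑ i, coinSign (ξ i)) / √n) ^ 2 / 2)
  rw [Fintype.card_bool, Fintype.card_fin, ← one_div, Nat.cast_ofNat, ← one_div_pow] at h
  simpa only [sum_range] using h

end CoinSign

end

/-- Let `ξ_1, ξ_2, …` be independent uniform random signs in `{+1, −1}`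
and `Z_n = n^{−1/2} Σ_{i=1}^n ξ_i`. Then for every real `s < 1`,
`E[exp(s Z_n² / 2)] → 1/√(1 − s)` as `n → ∞`. Here the expectation over the `n` signs is
written as a uniform average over `ξ : Fin n → Bool` (with `true ↦ +1`, `false ↦ −1`). -/
theorem statement15 (s : ℝ) (hs : s < 1) :
    Tendsto (fun n : ℕ =>
        (1 / 2) ^ n * ∑ ξ : Fin n → Bool,
          Real.exp (s * ((∑ i : Fin n, if ξ i then (1 : ℝ) else -1) / Real.sqrt n) ^ 2 / 2))
      atTop (nhds (1 / Real.sqrt (1 - s))) := by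
  exact (tendsto_integral_exp_mul_sq_sum_coinSign hs).congr
    (integral_exp_mul_sq_sum_coinSign s)

end
end

section
/- Let δ_k = ((a − b)/(a + b))^k. If H = ∪_i H_i is a vertex-disjoint union of cycles, where H_i is a cycle of length k_i, then Σ_{σ ∈ {±1}^{V(H)}} Π_{(u,v) ∈ E(H)} w_{uv}(σ) = 2^{|V(H)|} · Π_i (1 + δ_{k_i}), where w_{uv}(σ) = 2a/(a+b) if σ_u = σ_v and 2b/(a+b) otherwise. -/
open Filter
open scoped Classical

noncomputable section

/-!
Summing the edge weights of a cycle of length `k` over all spin configurations gives `tr (A ^ k)`,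
where `A` is the symmetric matrix of edge weights. For a weight `p` on equal spins and `q` on
different spins among `c` spins, `A = (p - q) I + q J` with `J` the all-ones matrix. The vector of
ones has eigenvalue `r = p + (c - 1) q`, so `A ^ n J = r ^ n J`, and `A ^ (n + 1) = A ^ n A` yields
a recursion for the traces with solution `r ^ n + (c - 1) (p - q) ^ n`. Here `c = 2`, `r = 2` and
`p - q = 2 (a - b) / (a + b)`. Distinct components involve distinct spins, so their sums multiply.
-/

section DisjointUnion

variable {ι S R : Type*} [Fintype ι] [DecidableEq ι] [Fintype S] [CommSemiring R]

lemma sum_sigma_prod_eq_prod_sum {V : ι → Type*} [∀ i, Fintype (V i)] [∀ i, DecidableEq (V i)]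
    (f : ∀ i, (V i → S) → R) :
    ∑ σ : (Σ i, V i) → S, ∏ i, f i (fun v ↦ σ ⟨i, v⟩) = ∏ i, ∑ τ : V i → S, f i τ := by
  rw [Fintype.prod_sum]
  exact (Equiv.piCurry fun (i : ι) (_ : V i) ↦ S).sum_comp fun τ ↦ ∏ i, f i (τ i)

end DisjointUnion

section TransferMatrix

open Matrix

variable {S R : Type*} [Fintype S] [DecidableEq S] [CommSemiring R]

lemma sum_prod_path_mul_eq_trace (A B : Matrix S S R) (n : ℕ) :
    ∑ σ : Fin (n + 1) → S, (∏ j : Fin n, A (σ j.castSucc) (σ j.succ)) * B (σ (Fin.last n)) (σ 0)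
      = trace (A ^ n * B) := by
  -- Removing the first vertex of the path replaces `B` by `B * A`.
  induction n generalizing B with
  | zero =>
    rw [← (Equiv.funUnique (Fin 1) S).symm.sum_comp]
    simp [trace]
  | succ n ih =>
    calc
      _ = ∑ τ : Fin (n + 1) → S, ∑ x : S, (A x (τ 0) * ∏ j : Fin n, A (τ j.castSucc) (τ j.succ)) *
            B (τ (Fin.last n)) x := by
        rw [← (Fin.consEquiv fun _ : Fin (n + 2) ↦ S).sum_comp, Fintype.sum_prod_type_right]
        simp only [Fin.consEquiv_apply, Fin.prod_univ_succ, ← Fin.succ_last, ← Fin.succ_castSucc,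
          Fin.castSucc_zero, Fin.cons_zero, Fin.cons_succ]
      _ = ∑ τ : Fin (n + 1) → S, (∏ j : Fin n, A (τ j.castSucc) (τ j.succ)) *
            (B * A) (τ (Fin.last n)) (τ 0) := by
        simp only [mul_apply, Finset.mul_sum]
        exact Finset.sum_congr rfl fun τ _ ↦ Finset.sum_congr rfl fun x _ ↦ by ring
      _ = trace (A ^ n * (B * A)) := ih (B * A)
      _ = trace (A ^ (n + 1) * B) := by rw [← Matrix.mul_assoc, trace_mul_cycle, ← pow_succ']

lemma sum_prod_cycle_eq_trace_pow (A : Matrix S S R) {n : ℕ} (hn : n ≠ 0) :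
    ∑ σ : Fin n → S, ∏ j, A (σ j) (σ (finRotate n j)) = trace (A ^ n) := by
  obtain ⟨m, rfl⟩ := Nat.exists_eq_succ_of_ne_zero hn
  have finRotate_castSucc (j : Fin m) : finRotate (m + 1) j.castSucc = j.succ :=
    (finRotate_apply _).trans Fin.coeSucc_eq_succ
  simp only [Nat.succ_eq_add_one, pow_succ, ← sum_prod_path_mul_eq_trace, Fin.prod_univ_castSucc,
    finRotate_last, finRotate_castSucc]

end TransferMatrix

section Potts

open Matrix

/-- The matrix of edge weights of a Potts model with spins in `S`: an edge has weight `p` if its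
ends carry the same spin and weight `q` otherwise. -/
def pottsMatrix (S : Type*) [DecidableEq S] {R : Type*} (p q : R) : Matrix S S R :=
  of fun x y ↦ if x = y then p else q

variable {S R : Type*} [DecidableEq S] [CommRing R]

lemma pottsMatrix_eq_smul_one_add_smul_vecMulVec (p q : R) :
    pottsMatrix S p q = (p - q) • (1 : Matrix S S R) + q • vecMulVec 1 1 := by
  ext x y
  by_cases h : x = y <;> simp [pottsMatrix, h]

variable [Fintype S]

lemma pottsMatrix_mulVec_one (p q : R) :
    pottsMatrix S p q *ᵥ 1 = (p + (Fintype.card S - 1) * q) • 1 := by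
  rw [pottsMatrix_eq_smul_one_add_smul_vecMulVec, add_mulVec, smul_mulVec, smul_mulVec, one_mulVec,
    vecMulVec_mulVec, one_dotProduct_one]
  ext x
  simp only [Pi.add_apply, Pi.smul_apply, Pi.one_apply, MulOpposite.smul_eq_mul_unop,
    MulOpposite.unop_op, smul_eq_mul]
  ring

lemma pottsMatrix_pow_mulVec_one (p q : R) (n : ℕ) :
    pottsMatrix S p q ^ n *ᵥ 1 = (p + (Fintype.card S - 1) * q) ^ n • 1 := by
  induction n with
  | zero => simp
  | succ n ih =>
    rw [pow_succ, ← mulVec_mulVec, pottsMatrix_mulVec_one, mulVec_smul, ih, smul_smul, pow_succ']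

lemma pottsMatrix_pow_succ (p q : R) (n : ℕ) :
    pottsMatrix S p q ^ (n + 1) = (p - q) • pottsMatrix S p q ^ n
      + (q * (p + (Fintype.card S - 1) * q) ^ n) • vecMulVec 1 1 :=
  calc
    _ = pottsMatrix S p q ^ n * ((p - q) • (1 : Matrix S S R) + q • vecMulVec 1 1) := by
      rw [pow_succ, ← pottsMatrix_eq_smul_one_add_smul_vecMulVec]
    _ = _ := by
      rw [Matrix.mul_add, Matrix.mul_smul, Matrix.mul_smul, Matrix.mul_one, mul_vecMulVec,
        pottsMatrix_pow_mulVec_one, smul_vecMulVec, smul_smul]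

lemma trace_pottsMatrix_pow (p q : R) (n : ℕ) :
    trace (pottsMatrix S p q ^ n)
      = (p + (Fintype.card S - 1) * q) ^ n + (Fintype.card S - 1) * (p - q) ^ n := by
  induction n with
  | zero => simp
  | succ n ih =>
    rw [pottsMatrix_pow_succ, trace_add, trace_smul, trace_smul, trace_vecMulVec,
      one_dotProduct_one, ih, smul_eq_mul, smul_eq_mul]
    ring

lemma sum_prod_cycles_ite_eq_prod {ι : Type*} [Fintype ι] [DecidableEq ι] {k : ι → ℕ}
    (hk : ∀ i, k i ≠ 0) (p q : R) :
    ∑ σ : (Σ i, Fin (k i)) → S, ∏ i, ∏ j,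
        (if σ ⟨i, j⟩ = σ ⟨i, finRotate (k i) j⟩ then p else q)
      = ∏ i, ((p + (Fintype.card S - 1) * q) ^ k i + (Fintype.card S - 1) * (p - q) ^ k i) := by
  calc
    _ = ∏ i, ∑ τ : Fin (k i) → S, ∏ j, pottsMatrix S p q (τ j) (τ (finRotate (k i) j)) :=
      sum_sigma_prod_eq_prod_sum fun i τ ↦ ∏ j, pottsMatrix S p q (τ j) (τ (finRotate (k i) j))
    _ = _ := by simp only [sum_prod_cycle_eq_trace_pow _ (hk _), trace_pottsMatrix_pow]

end Potts

lemma mk_add_one_mod_eq_finRotate {n : ℕ} (j : Fin n) :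
    (⟨(j.val + 1) % n, Nat.mod_lt _ j.pos⟩ : Fin n) = finRotate n j := by
  have := j.neZero
  rw [finRotate_apply, Fin.ext_iff, Fin.val_add, Fin.val_one', Nat.add_mod_mod]

theorem statement18_general {K : Type*} [Field K] {a b : K} (hab : a + b ≠ 0)
    {ι : Type*} [Fintype ι] [DecidableEq ι] {k : ι → ℕ} (hk : ∀ i, k i ≠ 0) :
    ∑ σ : (Σ i : ι, Fin (k i)) → Bool, ∏ i : ι, ∏ j : Fin (k i),
      (if σ ⟨i, j⟩ = σ ⟨i, ⟨(j.val + 1) % k i, Nat.mod_lt _ j.pos⟩⟩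
        then 2 * a / (a + b) else 2 * b / (a + b))
    = 2 ^ (∑ i : ι, k i) * ∏ i : ι, (1 + ((a - b) / (a + b)) ^ k i) := by
  have sum_weights : 2 * a / (a + b) + 2 * b / (a + b) = 2 := by field_simp
  have sub_weights : 2 * a / (a + b) - 2 * b / (a + b) = 2 * ((a - b) / (a + b)) := by ring
  have card_sub_one : (Fintype.card Bool : K) - 1 = 1 := by norm_num
  simp only [mk_add_one_mod_eq_finRotate]
  rw [sum_prod_cycles_ite_eq_prod hk, card_sub_one, one_mul, sum_weights, sub_weights,
    ← Finset.prod_pow_eq_pow_sum, ← Finset.prod_mul_distrib]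
  exact Finset.prod_congr rfl fun i _ ↦ by rw [one_mul, mul_pow, mul_add, mul_one]

/-- Let `δ_k = ((a − b)/(a + b))^k`. If `H = ∪_i H_i` is a vertex-disjoint
union of cycles, where `H_i` is a cycle of length `k_i` (here the vertex set of `H` is the
disjoint union `Σ i, Fin (k i)`, and the edges of `H_i` are `(j, j+1 mod k_i)`), then
`Σ_{σ ∈ {±1}^{V(H)}} Π_{(u,v) ∈ E(H)} w_{uv}(σ) = 2^{|V(H)|} · Π_i (1 + δ_{k_i})`,
where `w_{uv}(σ) = 2a/(a+b)` if `σ_u = σ_v` and `2b/(a+b)` otherwise. -/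
theorem statement18 (a b : ℝ) (hb : 0 < b) (hba : b < a)
    (ι : Type*) [Fintype ι] [DecidableEq ι] (k : ι → ℕ) (hk : ∀ i, 3 ≤ k i) :
    ∑ σ : (Σ i : ι, Fin (k i)) → Bool, ∏ i : ι, ∏ j : Fin (k i),
      (if σ ⟨i, j⟩ = σ ⟨i, ⟨(j.val + 1) % k i, Nat.mod_lt _ j.pos⟩⟩
        then 2 * a / (a + b) else 2 * b / (a + b))
    = 2 ^ (∑ i : ι, k i) * ∏ i : ι, (1 + ((a - b) / (a + b)) ^ k i) := by
  exact statement18_general (add_pos (hb.trans hba) hb).ne' fun i ↦ Nat.ne_zero_of_lt (hk i)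

end
end
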